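/- Let (X,d,μ) be a metric measure space, φ : X → ℝⁿ Lipschitz, and C ⊂ ℝⁿ a cone, and suppose μ has a C-Alberti representation with respect to φ. Then, for any cones C₁,…,C_m ⊂ ℝⁿ with C \ {0} contained in the union of the interiors of the C_i, there exists a Borel decomposition X = A₁ ∪ … ∪ A_m such that for each i, μ restricted to A_i has a C_i-Alberti representation with respect to φ. -/

import Mathlib

open MeasureTheory Metric Set Filter Topology ENNReal NNReal
open scoped RealInnerProductSpace

noncomputable section

namespace BKO

/-- `ℝⁿ` with the Euclidean metric. -/
abbrev E (n : ℕ) : Type := EuclideanSpace ℝ (Fin n)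

variable {X : Type*} [MetricSpace X]

/-- A set `G ⊆ ℝ × X` is the graph of a curve fragment if all first coordinates lie
in `[0,1]` and it is the graph of a `2`-biLipschitz function defined on a subset of `[0,1]`. -/
def IsFragmentGraph (X : Type*) [MetricSpace X] (G : Set (ℝ × X)) : Prop :=
  (∀ p ∈ G, p.1 ∈ Set.Icc (0:ℝ) 1) ∧
  ∀ p ∈ G, ∀ q ∈ G, |p.1 - q.1| ≤ 2 * dist p.2 q.2 ∧ dist p.2 q.2 ≤ 2 * |p.1 - q.1|

/-- The space `Γ(X)` of curve fragments, identified with their graphs (nonempty compact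
subsets of `[0,1] × X`), with the Hausdorff metric `d_Γ(γ₁,γ₂) = d_H(gr γ₁, gr γ₂)`. -/
def Fragment (X : Type*) [MetricSpace X] : Type _ :=
  {G : TopologicalSpace.NonemptyCompacts (ℝ × X) // IsFragmentGraph X (G : Set (ℝ × X))}

instance : MetricSpace (Fragment X) :=
  inferInstanceAs (MetricSpace {G : TopologicalSpace.NonemptyCompacts (ℝ × X) // _})

instance : MeasurableSpace (Fragment X) := borel _
instance : BorelSpace (Fragment X) := ⟨rfl⟩

namespace Fragment

/-- The graph of a curve fragment. -/
def graph (γ : Fragment X) : Set (ℝ × X) := (γ.1 : Set (ℝ × X))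

/-- The (compact) domain of a curve fragment. -/
def dom (γ : Fragment X) : Set ℝ := Prod.fst '' γ.graph

/-- The image of a curve fragment. -/
def im (γ : Fragment X) : Set X := Prod.snd '' γ.graph

/-- The function `dom γ → X` determined by the graph (junk value off the domain). -/
def fn (γ : Fragment X) (t : ℝ) : X :=
  @dite X (∃ x, (t, x) ∈ γ.graph) (Classical.dec _)
    (fun h => h.choose) (fun _ => γ.1.nonempty.choose.2)

/-- `γ_* 𝓛¹`: the pushforward under `γ` of Lebesgue measure restricted to `dom γ`. -/
def measure [MeasurableSpace X] (γ : Fragment X) : Measure X :=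
  (volume.restrict γ.dom).map γ.fn

end Fragment

/-- The measure `ν(ℙ)`, `ν(ℙ)(B) = ∫ γ_*𝓛¹(B) dℙ(γ)`. -/
def nu [MeasurableSpace X] (ℙ : Measure (Fragment X)) : Measure X :=
  ℙ.bind Fragment.measure

/-- The cone `C(w,θ) = {v : |⟨v,w⟩| ≥ θ‖v‖}`. -/
def cone {n : ℕ} (w : E n) (θ : ℝ) : Set (E n) := {v | θ * ‖v‖ ≤ |⟪v, w⟫|}

/-- A cone in `ℝⁿ` is a set of the form `C(w,θ)` with `w ∈ Sⁿ⁻¹`, `θ ∈ (0,1)`. -/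
def IsCone {n : ℕ} (C : Set (E n)) : Prop :=
  ∃ (w : E n) (θ : ℝ), ‖w‖ = 1 ∧ θ ∈ Set.Ioo (0:ℝ) 1 ∧ C = cone w θ

/-- `γ` is a `C`-curve with respect to `φ`. -/
def IsConeCurve {n : ℕ} (φ : X → E n) (C : Set (E n)) (γ : Fragment X) : Prop :=
  ∃ δ > (0:ℝ), ∀ p ∈ γ.graph, ∀ q ∈ γ.graph,
    φ p.2 - φ q.2 ∈ C \ Metric.ball 0 (δ * |p.1 - q.1|)

/-- `ℙ` is a `C`-Alberti representation of `μ` with respect to `φ`. -/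
def IsConeAlbertiRep [MeasurableSpace X] {n : ℕ} (μ : Measure X) (φ : X → E n)
    (C : Set (E n)) (ℙ : Measure (Fragment X)) : Prop :=
  IsProbabilityMeasure ℙ ∧ μ ≪ nu ℙ ∧ ∀ᵐ γ ∂ℙ, IsConeCurve φ C γ

/-- `S` is `C`-null with respect to `φ`: every `C`-curve meets `S` in `𝓗¹`-measure zero. -/
def ConeNull [MeasurableSpace X] [BorelSpace X] {n : ℕ} (φ : X → E n) (C : Set (E n))
    (S : Set X) : Prop :=
  ∀ γ : Fragment X, IsConeCurve φ C γ → μH[1] (γ.im ∩ S) = 0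

/-- Cones `C₁,…,C_m` are independent. -/
def IndepCones {n m : ℕ} (C : Fin m → Set (E n)) : Prop :=
  ∀ v : Fin m → E n, (∀ i, v i ∈ C i ∧ v i ≠ 0) → LinearIndependent ℝ v

/-- `μ` has `n` independent Alberti representations. -/
def HasIndepAlberti [MeasurableSpace X] (μ : Measure X) (n : ℕ) : Prop :=
  ∃ φ : X → E n, (∃ K, LipschitzWith K φ) ∧ ∃ C : Fin n → Set (E n),
    (∀ i, IsCone (C i)) ∧ IndepCones C ∧ ∀ i, ∃ ℙ, IsConeAlbertiRep μ φ (C i) ℙ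

/-- The collection `𝒮(φ)` of singular sets. -/
def MemScal [MeasurableSpace X] [BorelSpace X] {n : ℕ} (φ : X → E n) (S : Set X) : Prop :=
  MeasurableSet S ∧ ∀ θ ∈ Set.Ioo (0:ℝ) 1, ∃ (m : ℕ) (S' : Fin m → Set X) (w : Fin m → E n),
    S = (⋃ i, S' i) ∧ ∀ i, MeasurableSet (S' i) ∧ ‖w i‖ = 1 ∧ ConeNull φ (cone (w i) θ) (S' i)

/-- `Lip(f,x) = limsup_{r→0⁺} sup_{d(x,y)≤r} |f(y)-f(x)|/r`. -/
def lipAt (f : X → ℝ) (x : X) : ℝ :=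
  Filter.limsup (fun r : ℝ => sSup ((fun y => |f y - f x| / r) '' Metric.closedBall x r))
    (𝓝[>] (0:ℝ))

/-- `ind φ = {x : Lip(D⬝φ, x) > 0 for all D ∈ Sⁿ⁻¹}`. -/
def indSet {n : ℕ} (φ : X → E n) : Set X :=
  {x | ∀ D : E n, ‖D‖ = 1 → 0 < lipAt (fun y => ⟪φ y, D⟫) x}

/-- `f` is differentiable with respect to `φ` at `x₀`, with a unique derivative. -/
def DiffWrtAt {n : ℕ} (φ : X → E n) (f : X → ℝ) (x₀ : X) : Prop :=
  ∃! L : E n →ₗ[ℝ] ℝ,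
    Filter.Tendsto (fun x => |f x - f x₀ - L (φ x - φ x₀)| / dist x x₀) (𝓝[≠] x₀) (𝓝 0)

/-- `(X,d,μ)` is a Lipschitz differentiability space, with all chart dimensions
satisfying the predicate `P`. -/
def IsLipDiffSpaceWith [MeasurableSpace X] (μ : Measure X) (P : ℕ → Prop) : Prop :=
  ∃ (N : ℕ → ℕ) (U : ℕ → Set X) (φ : (i : ℕ) → X → E (N i)),
    (∀ i, P (N i)) ∧ (∀ i, MeasurableSet (U i)) ∧ (⋃ i, U i) = Set.univ ∧
    (∀ i, ∃ K, LipschitzWith K (φ i)) ∧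
    ∀ f : X → ℝ, (∃ K, LipschitzWith K f) →
      ∀ i, ∀ᵐ x ∂μ, x ∈ U i → DiffWrtAt (φ i) f x

/-- `ρ` is an upper gradient of `f`. -/
def IsUpperGradient (f ρ : X → ℝ) : Prop :=
  ∀ γ : ℝ → X, LipschitzOnWith 1 γ (Set.Icc 0 1) →
    |f (γ 1) - f (γ 0)| ≤ ∫ t in Set.Icc (0:ℝ) 1, ρ (γ t)

/-- `ρ` is a `*`-upper gradient of `f`. -/
def IsStarUpperGradient (f ρ : X → ℝ) : Prop :=
  ∀ γ : Fragment X, LipschitzOnWith 1 γ.fn γ.dom →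
    ∀ᵐ t ∂(volume.restrict γ.dom),
      ∀ v : ℝ, HasDerivWithinAt (f ∘ γ.fn) v γ.dom t → |v| ≤ ρ (γ.fn t)

/-- The dyadic cube of side length `2^{-m}` in `[0,1)ⁿ` indexed by `k`. -/
def dyadicCube (n m : ℕ) (k : Fin n → Fin (2 ^ m)) : Set (E n) :=
  {x | ∀ i, (k i : ℝ) / 2 ^ m ≤ x i ∧ x i < ((k i : ℝ) + 1) / 2 ^ m}

namespace Fragment

lemma fn_mem_graph {γ : Fragment X} {t : ℝ} (ht : t ∈ γ.dom) : (t, γ.fn t) ∈ γ.graph := by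
  obtain ⟨⟨t, x⟩, hx, rfl⟩ := ht
  have h : ∃ y, (t, y) ∈ γ.graph := ⟨x, hx⟩
  rw [fn, dif_pos h]
  exact h.choose_spec

lemma fst_mem_dom {γ : Fragment X} {p : ℝ × X} (hp : p ∈ γ.graph) : p.1 ∈ γ.dom :=
  mem_image_of_mem _ hp

lemma eq_of_mem_graph {γ : Fragment X} {t : ℝ} {x y : X} (hx : (t, x) ∈ γ.graph)
    (hy : (t, y) ∈ γ.graph) : x = y := by
  have h := (γ.2.2 _ hx _ hy).2
  simp only [sub_self, abs_zero, mul_zero] at h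
  exact dist_le_zero.1 h

lemma fn_fst {γ : Fragment X} {p : ℝ × X} (hp : p ∈ γ.graph) : γ.fn p.1 = p.2 :=
  eq_of_mem_graph (fn_mem_graph (fst_mem_dom hp)) hp

lemma isCompact_graph (γ : Fragment X) : IsCompact γ.graph := γ.1.isCompact

lemma isCompact_dom (γ : Fragment X) : IsCompact γ.dom := γ.isCompact_graph.image continuous_fst

lemma graph_nonempty (γ : Fragment X) : γ.graph.Nonempty := γ.1.nonempty

lemma dom_subset (γ : Fragment X) : γ.dom ⊆ Icc 0 1 := by
  rintro _ ⟨p, hp, rfl⟩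
  exact γ.2.1 p hp

lemma lipschitzOnWith_fn (γ : Fragment X) : LipschitzOnWith 2 γ.fn γ.dom := by
  refine LipschitzOnWith.of_dist_le_mul fun s hs t ht => ?_
  exact (γ.2.2 _ (fn_mem_graph hs) _ (fn_mem_graph ht)).2

lemma measure_apply [MeasurableSpace X] [BorelSpace X] (γ : Fragment X) {B : Set X}
    (hB : MeasurableSet B) :
    γ.measure B = volume {t | ∃ x ∈ B, (t, x) ∈ γ.graph} := by
  have hm : AEMeasurable γ.fn (volume.restrict γ.dom) :=
    γ.lipschitzOnWith_fn.continuousOn.aemeasurable γ.isCompact_dom.measurableSet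
  rw [measure, Measure.map_apply_of_aemeasurable hm hB,
    Measure.restrict_apply' γ.isCompact_dom.measurableSet]
  congr 1
  ext t
  constructor
  · rintro ⟨hB, ht⟩
    exact ⟨_, hB, fn_mem_graph ht⟩
  · rintro ⟨x, hx, h⟩
    exact ⟨by rw [mem_preimage, fn_fst h]; exact hx, fst_mem_dom h⟩

lemma measure_univ_le [MeasurableSpace X] [BorelSpace X] (γ : Fragment X) :
    γ.measure univ ≤ 1 := by
  rw [measure_apply _ MeasurableSet.univ]
  calc volume {t | ∃ x ∈ univ, (t, x) ∈ γ.graph} ≤ volume (Icc (0 : ℝ) 1) :=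
        measure_mono fun t ⟨x, _, h⟩ => γ.dom_subset (fst_mem_dom h)
    _ = 1 := by simp

lemma isOpen_graph_subset {U : Set (ℝ × X)} (hU : IsOpen U) :
    IsOpen {γ : Fragment X | γ.graph ⊆ U} :=
  (TopologicalSpace.NonemptyCompacts.isOpen_subsets_of_isOpen hU).preimage continuous_subtype_val

lemma isOpen_graph_inter_nonempty {U : Set (ℝ × X)} (hU : IsOpen U) :
    IsOpen {γ : Fragment X | (γ.graph ∩ U).Nonempty} :=
  (TopologicalSpace.NonemptyCompacts.isOpen_inter_nonempty_of_isOpen hU).preimage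
    continuous_subtype_val

lemma measurable_measure [MeasurableSpace X] [BorelSpace X] :
    Measurable (Fragment.measure : Fragment X → Measure X) := by
  have hfin (γ : Fragment X) : IsFiniteMeasure γ.measure :=
    ⟨γ.measure_univ_le.trans_lt ENNReal.one_lt_top⟩
  have hclosed (F : Set X) (hF : IsClosed F) : Measurable fun γ : Fragment X => γ.measure F := by
    refine measurable_of_Iio fun c => IsOpen.measurableSet (isOpen_iff_mem_nhds.2 fun γ hγ => ?_)
    simp only [mem_preimage, mem_Iio, measure_apply _ hF.measurableSet] at hγ
    obtain ⟨U, hsub, hU, hlt⟩ := Set.exists_isOpen_lt_of_lt _ _ hγ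
    have hopen : IsOpen (U ×ˢ (univ : Set X) ∪ (univ : Set ℝ) ×ˢ Fᶜ) :=
      (hU.prod isOpen_univ).union (isOpen_univ.prod hF.isOpen_compl)
    refine mem_of_superset ((isOpen_graph_subset hopen).mem_nhds ?_) ?_
    · rintro ⟨t, x⟩ h
      by_cases hx : x ∈ F
      · exact Or.inl ⟨hsub ⟨x, hx, h⟩, mem_univ _⟩
      · exact Or.inr ⟨mem_univ _, hx⟩
    · intro γ' hγ'
      simp only [mem_preimage, mem_Iio, measure_apply _ hF.measurableSet]
      refine (measure_mono ?_).trans_lt hlt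
      rintro t ⟨x, hx, h⟩
      rcases hγ' h with h | h
      · exact h.1
      · exact absurd hx h.2
  exact .measure_of_isPiSystem (BorelSpace.measurable_eq.trans borel_eq_generateFrom_isClosed)
    isPiSystem_isClosed hclosed (hclosed _ isClosed_univ)

/-- A map into fragments is measurable if the sets of parameters whose graph hits a given closed
set are measurable. -/
lemma measurable_of_isClosed_inter_nonempty [SecondCountableTopology X] {α : Type*}
    [MeasurableSpace α] {f : α → Fragment X}
    (hf : ∀ F : Set (ℝ × X), IsClosed F → MeasurableSet {a | ((f a).graph ∩ F).Nonempty}) :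
    Measurable f := by
  have : SecondCountableTopology (Fragment X) :=
    inferInstanceAs (SecondCountableTopology
      {G : TopologicalSpace.NonemptyCompacts (ℝ × X) // IsFragmentGraph X (G : Set (ℝ × X))})
  have htop : (inferInstance : TopologicalSpace (Fragment X)) =
      .generateFrom (preimage (graph : Fragment X → Set (ℝ × X)) ''
        (powerset '' {U | IsOpen U} ∪ (fun V => {s | (s ∩ V).Nonempty}) '' {V | IsOpen V})) := by
    rw [← induced_generateFrom_eq]
    exact induced_compose
  have hopen (V : Set (ℝ × X)) (hV : IsOpen V) :
      MeasurableSet {a | ((f a).graph ∩ V).Nonempty} := by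
    obtain ⟨F, hF, -, hU, -⟩ := hV.exists_iUnion_isClosed
    rw [← hU]
    simp only [inter_iUnion, nonempty_iUnion, ofPred_exists]
    exact .iUnion fun k => hf _ (hF k)
  refine measurable_iff_comap_le.2 ?_
  rw [BorelSpace.measurable_eq (α := Fragment X), borel_eq_generateFrom_of_subbasis htop,
    ← measurable_iff_comap_le]
  refine measurable_generateFrom ?_
  rintro _ ⟨_, ⟨U, hU, rfl⟩ | ⟨V, hV, rfl⟩, rfl⟩
  · convert (hf Uᶜ (IsOpen.isClosed_compl hU)).compl using 1
    ext a
    simp [inter_compl_nonempty_iff]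
  · exact hopen V hV

/-- The points of `γ` in `F` that are not `W`-related to any point of `γ`. -/
def piece (W : Set ((ℝ × X) × (ℝ × X))) (F : Set (ℝ × X)) (γ : Fragment X) : Set (ℝ × X) :=
  {p | p ∈ γ.graph ∩ F ∧ ∀ q ∈ γ.graph, (p, q) ∉ W}

lemma piece_subset {W : Set ((ℝ × X) × (ℝ × X))} {F : Set (ℝ × X)} {γ : Fragment X} :
    piece W F γ ⊆ γ.graph := fun _ hp => hp.1.1

lemma isCompact_piece {W : Set ((ℝ × X) × (ℝ × X))} (hW : IsOpen W) {F : Set (ℝ × X)}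
    (hF : IsClosed F) (γ : Fragment X) : IsCompact (piece W F γ) := by
  have hc : IsClosed {p | ∀ q ∈ γ.graph, (p, q) ∉ W} := by
    simp only [ofPred_forall]
    exact isClosed_biInter fun q _ =>
      (hW.preimage (Continuous.prodMk_left q)).isClosed_compl
  exact (γ.isCompact_graph.inter_right hF).inter_right hc

lemma isClosed_piece_nonempty {W : Set ((ℝ × X) × (ℝ × X))} (hW : IsOpen W) {F : Set (ℝ × X)}
    (hF : IsClosed F) : IsClosed {γ : Fragment X | (piece W F γ).Nonempty} := by
  refine ⟨isOpen_iff_mem_nhds.2 fun γ hγ => ?_⟩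
  have hγ : ∀ p ∈ γ.graph ∩ F, ∃ q ∈ γ.graph, (p, q) ∈ W := by
    by_contra! h
    exact hγ h
  obtain ⟨U, hU, hsub, hev⟩ : ∃ U, IsOpen U ∧ γ.graph ∩ F ⊆ U ∧
      ∀ᶠ γ' : Fragment X in 𝓝 γ, ∀ p ∈ γ'.graph ∩ U, ∃ q ∈ γ'.graph, (p, q) ∈ W := by
    refine (γ.isCompact_graph.inter_right hF).induction_on
      (p := fun s => ∃ U, IsOpen U ∧ s ⊆ U ∧
        ∀ᶠ γ' : Fragment X in 𝓝 γ, ∀ p ∈ γ'.graph ∩ U, ∃ q ∈ γ'.graph, (p, q) ∈ W)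
      ⟨∅, isOpen_empty, subset_rfl, by simp⟩ ?_ ?_ ?_
    · rintro s t hst ⟨U, hU, htU, h⟩
      exact ⟨U, hU, hst.trans htU, h⟩
    · rintro s t ⟨U, hU, hs, h⟩ ⟨V, hV, ht, h'⟩
      refine ⟨U ∪ V, hU.union hV, union_subset_union hs ht, ?_⟩
      filter_upwards [h, h'] with γ' h h'
      rintro p ⟨hp, hpU | hpV⟩
      · exact h p ⟨hp, hpU⟩
      · exact h' p ⟨hp, hpV⟩
    · intro p hp
      obtain ⟨q, hq, hpq⟩ := hγ p hp
      obtain ⟨U, V, hU, hV, hpU, hqV, hUV⟩ := isOpen_prod_iff.1 hW p q hpq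
      refine ⟨U, mem_nhdsWithin_of_mem_nhds (hU.mem_nhds hpU), U, hU, subset_rfl, ?_⟩
      filter_upwards [(isOpen_graph_inter_nonempty hV).mem_nhds ⟨q, hq, hqV⟩]
      rintro γ' ⟨q', hq', hqV'⟩ p' hp'
      exact ⟨q', hq', hUV ⟨hp'.2, hqV'⟩⟩
  have hsub' : γ.graph ⊆ U ∪ Fᶜ := fun p hp => by
    by_cases hpF : p ∈ F
    · exact Or.inl (hsub ⟨hp, hpF⟩)
    · exact Or.inr hpF
  filter_upwards [hev, (isOpen_graph_subset (hU.union hF.isOpen_compl)).mem_nhds hsub']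
    with γ' h h'
  rintro ⟨p, hp, hpW⟩
  rcases h' hp.1 with hpU | hpF
  · obtain ⟨q, hq, hpq⟩ := h p ⟨hp.1, hpU⟩
    exact hpW q hq hpq
  · exact hpF hp.2

lemma isClosed_forall_notMem {W : Set ((ℝ × X) × (ℝ × X))} (hW : IsOpen W) :
    IsClosed {γ : Fragment X | ∀ p ∈ γ.graph, ∀ q ∈ γ.graph, (p, q) ∉ W} := by
  refine ⟨isOpen_iff_mem_nhds.2 fun γ hγ => ?_⟩
  obtain ⟨p, hp, q, hq, hpq⟩ : ∃ p ∈ γ.graph, ∃ q ∈ γ.graph, (p, q) ∈ W := by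
    by_contra! h
    exact hγ h
  obtain ⟨U, V, hU, hV, hpU, hqV, hUV⟩ := isOpen_prod_iff.1 hW p q hpq
  filter_upwards [(isOpen_graph_inter_nonempty hU).mem_nhds ⟨p, hp, hpU⟩,
    (isOpen_graph_inter_nonempty hV).mem_nhds ⟨q, hq, hqV⟩]
  rintro γ' ⟨p', hp', hpU'⟩ ⟨q', hq', hqV'⟩ h
  exact h p' hp' q' hq' (hUV ⟨hpU', hqV'⟩)

/-- The fragment whose graph is a nonempty compact subset of the graph of `γ`. -/
def ofSubset (γ : Fragment X) {G : Set (ℝ × X)} (hG : IsCompact G) (hne : G.Nonempty)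
    (hsub : G ⊆ γ.graph) : Fragment X :=
  ⟨⟨⟨G, hG⟩, hne⟩, fun p hp => γ.2.1 p (hsub hp),
    fun p hp q hq => γ.2.2 p (hsub hp) q (hsub hq)⟩

open Classical in
/-- The fragment with graph `piece W F γ`, or `γ₀` if that set is empty. -/
def restr {W : Set ((ℝ × X) × (ℝ × X))} (hW : IsOpen W) {F : Set (ℝ × X)} (hF : IsClosed F)
    (γ₀ γ : Fragment X) : Fragment X :=
  if h : (piece W F γ).Nonempty then
    γ.ofSubset (isCompact_piece hW hF γ) h piece_subset
  else γ₀

lemma graph_restr {W : Set ((ℝ × X) × (ℝ × X))} (hW : IsOpen W) {F : Set (ℝ × X)}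
    (hF : IsClosed F) (γ₀ : Fragment X) {γ : Fragment X} (h : (piece W F γ).Nonempty) :
    (restr hW hF γ₀ γ).graph = piece W F γ := by
  rw [restr, dif_pos h]
  rfl

lemma restr_of_not_nonempty {W : Set ((ℝ × X) × (ℝ × X))} (hW : IsOpen W) {F : Set (ℝ × X)}
    (hF : IsClosed F) (γ₀ : Fragment X) {γ : Fragment X} (h : ¬ (piece W F γ).Nonempty) :
    restr hW hF γ₀ γ = γ₀ := dif_neg h

lemma measurable_restr [SecondCountableTopology X] {W : Set ((ℝ × X) × (ℝ × X))} (hW : IsOpen W)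
    {F : Set (ℝ × X)} (hF : IsClosed F) (γ₀ : Fragment X) : Measurable (restr hW hF γ₀) := by
  refine measurable_of_isClosed_inter_nonempty fun F' hF' => ?_
  have heq : {γ : Fragment X | ((restr hW hF γ₀ γ).graph ∩ F').Nonempty} =
      {γ | (piece W (F ∩ F') γ).Nonempty} ∪
        ({γ | (piece W F γ).Nonempty}ᶜ ∩ {_γ | (γ₀.graph ∩ F').Nonempty}) := by
    ext γ
    have hpiece : piece W (F ∩ F') γ = piece W F γ ∩ F' := by
      ext p
      simp only [piece, mem_inter_iff, mem_ofPred_eq]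
      tauto
    simp only [mem_union, mem_inter_iff, mem_compl_iff, mem_ofPred_eq, hpiece]
    by_cases h : (piece W F γ).Nonempty
    · simp [graph_restr hW hF γ₀ h, h]
    · simp [restr_of_not_nonempty hW hF γ₀ h, not_nonempty_iff_eq_empty.1 h]
  rw [heq]
  exact (isClosed_piece_nonempty hW (hF.inter hF')).measurableSet.union
    ((isClosed_piece_nonempty hW hF).measurableSet.compl.inter (.const _))

/-- The fragment consisting of a single point. -/
def single (x : X) : Fragment X :=
  ⟨{(0, x)}, by simp, by simp⟩

lemma graph_single (x : X) : (single x).graph = {(0, x)} := rfl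

end Fragment

lemma nu_apply_eq_zero_iff [MeasurableSpace X] [BorelSpace X] {ℙ : Measure (Fragment X)}
    {B : Set X} (hB : MeasurableSet B) : nu ℙ B = 0 ↔ ∀ᵐ γ ∂ℙ, γ.measure B = 0 := by
  rw [nu, Measure.bind_apply hB Fragment.measurable_measure.aemeasurable,
    lintegral_eq_zero_iff
      (show Measurable fun γ : Fragment X => γ.measure B from
        (Measure.measurable_coe hB).comp Fragment.measurable_measure)]
  rfl

instance [MeasurableSpace X] [BorelSpace X] {ℙ : Measure (Fragment X)} [IsProbabilityMeasure ℙ] :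
    IsFiniteMeasure (nu ℙ) := by
  refine ⟨?_⟩
  rw [nu, Measure.bind_apply .univ Fragment.measurable_measure.aemeasurable]
  calc ∫⁻ γ, γ.measure univ ∂ℙ ≤ ∫⁻ _, 1 ∂ℙ := lintegral_mono fun γ => γ.measure_univ_le
    _ < ∞ := by simp

namespace IsCone

variable {n : ℕ} {C : Set (E n)}

lemma isClosed (hC : IsCone C) : IsClosed C := by
  obtain ⟨w, θ, -, -, rfl⟩ := hC
  exact isClosed_le (by fun_prop) (by fun_prop)

lemma smul_mem (hC : IsCone C) (c : ℝ) {v : E n} (hv : v ∈ C) : c • v ∈ C := by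
  obtain ⟨w, θ, -, -, rfl⟩ := hC
  simp only [cone, mem_ofPred_eq, norm_smul, real_inner_smul_left, abs_mul, Real.norm_eq_abs]
    at hv ⊢
  nlinarith [mul_le_mul_of_nonneg_left hv (abs_nonneg c)]

lemma zero_mem (hC : IsCone C) : (0 : E n) ∈ C := by
  obtain ⟨w, θ, -, -, rfl⟩ := hC
  simp [cone]

lemma exists_ne_zero_mem (hC : IsCone C) : ∃ w ∈ C, w ≠ 0 := by
  obtain ⟨w, θ, hw, hθ, rfl⟩ := hC
  refine ⟨w, ?_, norm_ne_zero_iff.1 (by simp [hw])⟩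
  simp [cone, hw, hθ.2.le]

end IsCone

section

variable {n : ℕ} {φ : X → E n} {C : Set (E n)}

lemma isConeCurve_single (hC : IsCone C) (x : X) : IsConeCurve φ C (Fragment.single x) := by
  refine ⟨1, one_pos, ?_⟩
  simp [Fragment.graph_single, hC.zero_mem]

lemma measurableSet_isConeCurve (hφ : Continuous φ) (hC : IsCone C) :
    MeasurableSet {γ : Fragment X | IsConeCurve φ C γ} := by
  let W (k : ℕ) : Set ((ℝ × X) × (ℝ × X)) := {z | φ z.1.2 - φ z.2.2 ∈ Cᶜ} ∪
    {z | ‖φ z.1.2 - φ z.2.2‖ < 1 / ((k : ℝ) + 1) * |z.1.1 - z.2.1|}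
  have hW (k : ℕ) : IsOpen (W k) :=
    (hC.isClosed.isOpen_compl.preimage (by fun_prop)).union
      (isOpen_lt (by fun_prop) (by fun_prop))
  have heq : {γ : Fragment X | IsConeCurve φ C γ} =
      ⋃ k, {γ | ∀ p ∈ γ.graph, ∀ q ∈ γ.graph, (p, q) ∉ W k} := by
    ext γ
    simp only [mem_iUnion, mem_ofPred_eq]
    constructor
    · rintro ⟨δ, hδ, h⟩
      obtain ⟨k, hk⟩ := exists_nat_one_div_lt hδ
      refine ⟨k, fun p hp q hq hpq => ?_⟩
      have hmem := h p hp q hq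
      rcases hpq with hpq | hpq
      · exact hpq hmem.1
      · refine hmem.2 (mem_ball_zero_iff.2 (lt_of_lt_of_le hpq ?_))
        exact mul_le_mul_of_nonneg_right hk.le (abs_nonneg _)
    · rintro ⟨k, h⟩
      refine ⟨1 / ((k : ℝ) + 1), by positivity, fun p hp q hq => ?_⟩
      have hmem := h p hp q hq
      exact ⟨by_contra fun hc => hmem (Or.inl hc),
        fun hb => hmem (Or.inr (mem_ball_zero_iff.1 hb))⟩
  rw [heq]
  exact .iUnion fun k => (Fragment.isClosed_forall_notMem (hW k)).measurableSet

/-- Almost everywhere along a `C`-curve, the difference quotients of `φ` at small scale lie in one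
of the cones whose interiors cover `C \ {0}`. -/
lemma IsConeCurve.ae_exists_mem {K : ℝ≥0} (hφ : LipschitzWith K φ) (hC : IsCone C) {m : ℕ}
    {C' : Fin m → Set (E n)} (hC' : ∀ i, IsCone (C' i))
    (hcover : C \ {0} ⊆ ⋃ i, interior (C' i)) {γ : Fragment X} (hγ : IsConeCurve φ C γ) :
    ∀ᵐ t : ℝ, t ∈ γ.dom → ∃ i, ∃ η > 0, ∀ s ∈ γ.dom, |s - t| < η →
      φ (γ.fn t) - φ (γ.fn s) ∈ C' i := by
  obtain ⟨δ, hδ, hγ⟩ := hγ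
  have hlip : LipschitzOnWith (K * 2) (φ ∘ γ.fn) γ.dom :=
    hφ.comp_lipschitzOnWith γ.lipschitzOnWith_fn
  filter_upwards [hlip.locallyBoundedVariationOn.ae_differentiableWithinAt_of_mem] with t hdiff ht
  set v := derivWithin (φ ∘ γ.fn) γ.dom t
  have hslope : Tendsto (slope (φ ∘ γ.fn) t) (𝓝[γ.dom \ {t}] t) (𝓝 v) :=
    hasDerivWithinAt_iff_tendsto_slope.1 (hdiff ht).hasDerivWithinAt
  obtain ⟨i, hi⟩ : ∃ i, ∀ᶠ s in 𝓝[γ.dom \ {t}] t, slope (φ ∘ γ.fn) t s ∈ C' i := by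
    rcases eq_or_neBot (𝓝[γ.dom \ {t}] t) with hbot | hne
    · obtain ⟨w, hw, hw0⟩ := hC.exists_ne_zero_mem
      obtain ⟨i, -⟩ := mem_iUnion.1 (hcover ⟨hw, hw0⟩)
      exact ⟨i, by simp [hbot]⟩
    · have hmem : ∀ᶠ s in 𝓝[γ.dom \ {t}] t,
          slope (φ ∘ γ.fn) t s ∈ C ∧ δ ≤ ‖slope (φ ∘ γ.fn) t s‖ := by
        filter_upwards [self_mem_nhdsWithin] with s hs
        have h := hγ _ (Fragment.fn_mem_graph hs.1) _ (Fragment.fn_mem_graph ht)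
        have hpos : 0 < |s - t| := abs_pos.2 (sub_ne_zero.2 hs.2)
        rw [slope_def_module]
        refine ⟨hC.smul_mem _ h.1, ?_⟩
        have hb := not_lt.1 fun hlt => h.2 (mem_ball_zero_iff.2 hlt)
        rw [norm_smul, norm_inv, Real.norm_eq_abs, ← div_eq_inv_mul, le_div_iff₀ hpos]
        exact hb
      have hvC : v ∈ C := hC.isClosed.mem_of_tendsto hslope (hmem.mono fun _ h => h.1)
      have hvδ : δ ≤ ‖v‖ := ge_of_tendsto hslope.norm (hmem.mono fun _ h => h.2)
      have hv0 : v ≠ 0 := norm_pos_iff.1 (hδ.trans_le hvδ)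
      obtain ⟨i, hi⟩ := mem_iUnion.1 (hcover ⟨hvC, hv0⟩)
      exact ⟨i, hslope (mem_interior_iff_mem_nhds.1 hi)⟩
  obtain ⟨η, hη, hball⟩ := Metric.mem_nhdsWithin_iff.1 hi
  refine ⟨i, η, hη, fun s hs hst => ?_⟩
  rcases eq_or_ne s t with rfl | hne
  · simpa using (hC' i).zero_mem
  · have hmem : slope (φ ∘ γ.fn) t s ∈ C' i := hball ⟨hst, hs, hne⟩
    have h := (hC' i).smul_mem (-(s - t)) hmem
    rwa [neg_smul, sub_smul_slope, vsub_eq_sub, neg_sub] at h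

/-- Pairs of points near `r` in the first coordinate, at scale `ε`, whose `φ`-difference is not
in `C`. -/
def badPairs (φ : X → E n) (C : Set (E n)) (r ε : ℝ) : Set ((ℝ × X) × (ℝ × X)) :=
  {z | z.2.1 ∈ Metric.ball r (2 * ε) ∧ φ z.1.2 - φ z.2.2 ∈ Cᶜ}

lemma isOpen_badPairs (hφ : Continuous φ) (hC : IsCone C) (r ε : ℝ) :
    IsOpen (badPairs φ C r ε) :=
  (Metric.isOpen_ball.preimage (by fun_prop)).inter
    (hC.isClosed.isOpen_compl.preimage (by fun_prop))

lemma isClosed_closedBall_prod_univ (r ε : ℝ) :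
    IsClosed (Metric.closedBall r ε ×ˢ (univ : Set X)) :=
  Metric.isClosed_closedBall.prod isClosed_univ

lemma IsConeCurve.restr {C' : Set (E n)} (hφ : Continuous φ) (hC' : IsCone C') {r ε : ℝ}
    (hε : 0 < ε) {γ₀ γ : Fragment X} (hγ : IsConeCurve φ C γ) (hγ₀ : IsConeCurve φ C' γ₀) :
    IsConeCurve φ C' (Fragment.restr (isOpen_badPairs hφ hC' r ε)
      (isClosed_closedBall_prod_univ r ε) γ₀ γ) := by
  by_cases h : (Fragment.piece (badPairs φ C' r ε) (Metric.closedBall r ε ×ˢ univ) γ).Nonempty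
  · obtain ⟨δ, hδ, hγ⟩ := hγ
    refine ⟨δ, hδ, ?_⟩
    rw [Fragment.graph_restr _ _ _ h]
    intro p hp q hq
    refine ⟨by_contra fun hc => hp.2 q hq.1.1 ⟨?_, hc⟩, (hγ p hp.1.1 q hq.1.1).2⟩
    exact Metric.closedBall_subset_ball (by linarith) hq.1.2.1
  · rwa [Fragment.restr_of_not_nonempty _ _ _ h]

/-- A countable convex combination of push-forwards of `ℙ`, whose null sets are those that are null
for every push-forward. -/
lemma exists_mixture {α β : Type*} [MeasurableSpace α] [MeasurableSpace β] (ℙ : Measure α)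
    [IsProbabilityMeasure ℙ] {Ψ : ℕ → α → β} (hΨ : ∀ a, Measurable (Ψ a)) :
    ∃ ℙ' : Measure β, IsProbabilityMeasure ℙ' ∧
      ∀ p : β → Prop, (∀ᵐ y ∂ℙ', p y) ↔ ∀ a, ∀ᵐ y ∂ℙ.map (Ψ a), p y := by
  refine ⟨Measure.sum fun a : ℕ => (2 ^ (-1 - (a : ℤ)) : ℝ≥0∞) • ℙ.map (Ψ a), ⟨?_⟩, fun p => ?_⟩
  · rw [Measure.sum_apply _ .univ, ← ENNReal.tsum_two_zpow_neg_add_one]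
    refine tsum_congr fun a => ?_
    have := Measure.isProbabilityMeasure_map (μ := ℙ) (hΨ a).aemeasurable
    simp
  · rw [Measure.ae_sum_iff]
    refine forall_congr' fun a => ?_
    have h0 : (2 ^ (-1 - a : ℤ) : ℝ≥0∞) ≠ 0 :=
      (ENNReal.zpow_pos (by simp) (by simp) _).ne'
    rw [Measure.ae_ennreal_smul_measure_eq h0]

lemma exists_decomposition {α : Type*} [MeasurableSpace α] {m : ℕ} [NeZero m] {μ : Measure α}
    [SigmaFinite μ] {ν : Fin m → Measure α} [∀ i, IsFiniteMeasure (ν i)]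
    (h : ∀ B, MeasurableSet B → (∀ i, ν i B = 0) → μ B = 0) :
    ∃ A : Fin m → Set α, (∀ i, MeasurableSet (A i)) ∧ (⋃ i, A i) = univ ∧
      ∀ i, μ.restrict (A i) ≪ ν i := by
  choose S hS hS0 hSc using fun i => μ.mutuallySingular_singularPart (ν i)
  have hN : MeasurableSet (⋂ i, (S i)ᶜ) := .iInter fun i => (hS i).compl
  have hN0 : μ (⋂ i, (S i)ᶜ) = 0 :=
    h _ hN fun i => measure_mono_null (iInter_subset _ i) (hSc i)
  refine ⟨fun i => S i ∪ ⋂ i, (S i)ᶜ, fun i => (hS i).union hN, ?_, fun i => ?_⟩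
  · rw [← iUnion_union, ← compl_iUnion, union_compl_self]
  · refine .mk fun B hB hB0 => ?_
    rw [Measure.restrict_apply hB, inter_union_distrib_left]
    refine measure_union_null ?_ (measure_mono_null inter_subset_right hN0)
    rw [μ.haveLebesgueDecomposition_add (ν i), Measure.add_apply]
    rw [measure_mono_null inter_subset_right (hS0 i), zero_add]
    exact measure_mono_null inter_subset_left (withDensity_absolutelyContinuous _ _ hB0)

end

variable {X : Type*} [MetricSpace X] [CompleteSpace X] [TopologicalSpace.SeparableSpace X]
  [MeasurableSpace X] [BorelSpace X]

/-- If `μ` has a `C`-Alberti representation with respect to `φ` and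
`C \\ {0}` is covered by the interiors of cones `C₁,…,C_m`, then there is a Borel
decomposition `X = A₁ ∪ … ∪ A_m` such that each `μ|_{Aᵢ}` has a `Cᵢ`-Alberti
representation with respect to `φ`. -/
theorem refine_alberti (μ : Measure X) [SigmaFinite μ] {n : ℕ}
    (φ : X → E n) (hφ : ∃ K, LipschitzWith K φ) (C : Set (E n)) (hC : IsCone C)
    (hrep : ∃ ℙ : Measure (Fragment X), IsConeAlbertiRep μ φ C ℙ)
    {m : ℕ} (C' : Fin m → Set (E n)) (hC' : ∀ i, IsCone (C' i))
    (hcover : C \ {0} ⊆ ⋃ i, interior (C' i)) :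
    ∃ A : Fin m → Set X, (∀ i, MeasurableSet (A i)) ∧ (⋃ i, A i) = Set.univ ∧
      ∀ i, ∃ ℙ : Measure (Fragment X), IsConeAlbertiRep (μ.restrict (A i)) φ (C' i) ℙ := by
  obtain ⟨K, hφ⟩ := hφ
  obtain ⟨ℙ, hℙ, hac, hcone⟩ := hrep
  have : SecondCountableTopology X := UniformSpace.secondCountable_of_separable X
  obtain ⟨w, hw, hw0⟩ := hC.exists_ne_zero_mem
  obtain ⟨i₀, -⟩ := mem_iUnion.1 (hcover ⟨hw, hw0⟩)
  have : NeZero m := ⟨i₀.pos.ne'⟩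
  obtain ⟨γ₁⟩ := nonempty_of_isProbabilityMeasure ℙ
  obtain ⟨⟨_, x₀⟩, -⟩ := γ₁.graph_nonempty
  obtain ⟨e, he⟩ := exists_surjective_nat (ℚ × ℕ)
  let ε (a : ℕ) : ℝ := 1 / ((e a).2 + 1)
  have hε (a : ℕ) : 0 < ε a := by positivity
  let Ψ (i : Fin m) (a : ℕ) : Fragment X → Fragment X :=
    Fragment.restr (isOpen_badPairs hφ.continuous (hC' i) (e a).1 (ε a))
      (isClosed_closedBall_prod_univ (e a).1 (ε a)) (Fragment.single x₀)
  have hΨ (i : Fin m) (a : ℕ) : Measurable (Ψ i a) := Fragment.measurable_restr _ _ _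
  choose Q hQ hQae using fun i => exists_mixture ℙ (hΨ i)
  obtain ⟨A, hA, hAuniv, hAac⟩ := exists_decomposition (μ := μ) (ν := fun i => nu (Q i)) <| by
    intro B hB h0
    refine hac ((nu_apply_eq_zero_iff hB).2 ?_)
    have hΨ0 : ∀ᵐ γ ∂ℙ, ∀ i a, (Ψ i a γ).measure B = 0 := by
      refine ae_all_iff.2 fun i => ae_all_iff.2 fun a => ?_
      exact ae_of_ae_map (hΨ i a).aemeasurable
        ((hQae i _).1 ((nu_apply_eq_zero_iff hB).1 (h0 i)) a)
    filter_upwards [hΨ0, hcone] with γ hγ0 hγ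
    rw [Fragment.measure_apply _ hB]
    have hnull : volume (⋃ i, ⋃ a, {t | ∃ x ∈ B, (t, x) ∈ (Ψ i a γ).graph}) = 0 := by
      refine measure_iUnion_null fun i => measure_iUnion_null fun a => ?_
      rw [← Fragment.measure_apply _ hB]
      exact hγ0 i a
    refine measure_mono_null_ae ?_ hnull
    filter_upwards [hγ.ae_exists_mem hφ hC hC' hcover] with t ht
    rintro ⟨x, hx, htx⟩
    obtain ⟨i, η, hη, hi⟩ := ht (Fragment.fst_mem_dom htx)
    obtain ⟨k, hk⟩ := exists_nat_one_div_lt (show 0 < η / 3 by positivity)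
    obtain ⟨r, hr, hr'⟩ := exists_rat_btwn
      (show t < t + 1 / ((k : ℝ) + 1) by simpa using by positivity)
    obtain ⟨a, ha⟩ := he (r, k)
    have hεa : ε a = 1 / ((k : ℝ) + 1) := by simp [ε, ha]
    have hra : ((e a).1 : ℝ) = r := by rw [ha]
    have hmem : (t, x) ∈ Fragment.piece (badPairs φ (C' i) (e a).1 (ε a))
        (Metric.closedBall ((e a).1 : ℝ) (ε a) ×ˢ univ) γ := by
      rw [hεa, hra]
      refine ⟨⟨htx, ?_, mem_univ _⟩, ?_⟩
      · rw [Metric.mem_closedBall, Real.dist_eq, abs_le]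
        constructor <;> linarith
      · rintro q hq ⟨hqr, hqC⟩
        refine hqC ?_
        have h := hi q.1 (Fragment.fst_mem_dom hq) ?_
        · rwa [Fragment.fn_fst hq, Fragment.fn_fst htx] at h
        · rw [Metric.mem_ball, Real.dist_eq, abs_lt] at hqr
          rw [abs_lt]
          constructor <;> linarith [hqr.1, hqr.2]
    refine mem_iUnion₂.2 ⟨i, a, x, hx, ?_⟩
    rwa [Fragment.graph_restr _ _ _ ⟨_, hmem⟩]
  refine ⟨A, hA, hAuniv, fun i => ⟨Q i, hQ i, hAac i, ?_⟩⟩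
  refine (hQae i _).2 fun a => ?_
  rw [ae_map_iff (hΨ i a).aemeasurable (measurableSet_isConeCurve hφ.continuous (hC' i))]
  filter_upwards [hcone] with γ hγ
  exact hγ.restr hφ.continuous (hC' i) (hε a) (isConeCurve_single (hC' i) x₀)

end BKO
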